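/- arXiv:2601.12198 — 2 statements merged into one kernel-verified Lean document; each statement's English description precedes it below -/
import Mathlib

section
/- Let σ > 0, ρ ∈ (−1,1), and let Σ = σ²·[[1, ρ],[ρ, 1]]. Let μ be a Borel probability measure on ℝ² having density x ↦ g(xᵀΣ⁻¹x) with respect to Lebesgue measure for some nonnegative measurable g : [0,∞) → [0,∞). Then the pushforward of μ under the map x = (x₁,x₂) ↦ atanh(2x₁x₂/(x₁² + x₂²)) (defined μ-almost everywhere) is absolutely continuous with respect to Lebesgue measure on ℝ with density t ↦ (1/π)·sech(t − atanh ρ). -/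
/-!
The linear map `x ↦ (x₁ + x₂, x₁ - x₂)` carries an elliptical law with parameter `Σ` to one with
diagonal parameter `2σ² diag(1 + ρ, 1 - ρ)`, and the similarity measure is `log |y₁ / y₂|` in the
new coordinates. In the coordinates `s = y₁ / y₂`, `w = √(yᵀ S⁻¹ y)`, an elliptical density
with parameter `S` separates, whatever its profile: the ratio `s` is Cauchy distributed, here with
location `0` and scale `√((1 + ρ) / (1 - ρ)) = exp (atanh ρ)`. The substitution `s = ± exp t` turns
the Cauchy density with location `0` and scale `γ` into `t ↦ π⁻¹ sech (t - log γ)`.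
-/

open MeasureTheory Matrix Real
open ProbabilityTheory
open scoped ENNReal NNReal

section ChangeOfVariables

lemma map_withDensity_comp {α β : Type*} [MeasurableSpace α] [MeasurableSpace β] (μ : Measure α)
    {e : α → β} (he : Measurable e) {F : β → ℝ≥0∞} (hF : Measurable F) :
    (μ.withDensity (F ∘ e)).map e = (μ.map e).withDensity F := by
  ext s hs
  rw [Measure.map_apply he hs, withDensity_apply _ (he hs), withDensity_apply _ hs,
    setLIntegral_map hs hF he]
  rfl

lemma lintegral_comp_mul_left_real (f : ℝ → ℝ≥0∞) {a : ℝ} (ha : a ≠ 0) :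
    ∫⁻ x, f (a * x) = ENNReal.ofReal |a⁻¹| * ∫⁻ x, f x := by
  rw [← smul_eq_mul, ← lintegral_smul_measure, ← Real.map_volume_mul_left ha]
  exact ((Homeomorph.mulLeft₀ a ha).measurableEmbedding.lintegral_map f).symm

lemma lintegral_eq_two_mul_setLIntegral_Ioi {f : ℝ → ℝ≥0∞} (hf : Function.Even f) :
    ∫⁻ x, f x = 2 * ∫⁻ x in Set.Ioi 0, f x := by
  have h_neg : ∫⁻ x in Set.Iio 0, f x = ∫⁻ x in Set.Ioi 0, f x := by
    have h := (Measure.measurePreserving_neg (volume : Measure ℝ)).setLIntegral_comp_preimage_emb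
      (MeasurableEquiv.neg ℝ).measurableEmbedding f (Set.Ioi 0)
    simpa [hf _] using h
  rw [← lintegral_add_compl f measurableSet_Iio, Set.compl_Iio,
    ← setLIntegral_congr Ioi_ae_eq_Ici, h_neg, two_mul]

lemma setLIntegral_Ioi_eq_lintegral_exp (f : ℝ → ℝ≥0∞) :
    ∫⁻ x in Set.Ioi 0, f x = ∫⁻ t, ENNReal.ofReal (exp t) * f (exp t) := by
  rw [← Real.range_exp, ← Set.image_univ,
    lintegral_image_eq_lintegral_abs_deriv_mul MeasurableSet.univ
      (fun t _ => (Real.hasDerivAt_exp t).hasDerivWithinAt) Real.exp_injective.injOn,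
    setLIntegral_univ]
  simp only [Real.abs_exp]

lemma lintegral_fin_two_eq_lintegral_abs_mul {f : (Fin 2 → ℝ) → ℝ≥0∞} (hf : Measurable f) :
    ∫⁻ x, f x = ∫⁻ s, ∫⁻ q, ENNReal.ofReal |q| * f ![s * q, q] := by
  have h_inner : ∀ᵐ q : ℝ, ∫⁻ p, f ![p, q] = ∫⁻ s, ENNReal.ofReal |q| * f ![s * q, q] := by
    filter_upwards [Measure.ae_ne volume (0 : ℝ)] with q hq
    simp only [mul_comm _ q]
    rw [lintegral_const_mul' _ _ ENNReal.ofReal_ne_top,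
      lintegral_comp_mul_left_real (fun p => f ![p, q]) hq, ← mul_assoc,
      ← ENNReal.ofReal_mul (abs_nonneg _), ← abs_mul, mul_inv_cancel₀ hq, abs_one,
      ENNReal.ofReal_one, one_mul]
  calc ∫⁻ x, f x = ∫⁻ p : ℝ × ℝ, f ![p.1, p.2] :=
        ((volume_preserving_finTwoArrow ℝ).symm _).lintegral_comp hf |>.symm
    _ = ∫⁻ q, ∫⁻ p, f ![p, q] := by
        rw [Measure.volume_eq_prod, lintegral_prod_symm' _ (by fun_prop)]
    _ = ∫⁻ q, ∫⁻ s, ENNReal.ofReal |q| * f ![s * q, q] := lintegral_congr_ae h_inner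
    _ = ∫⁻ s, ∫⁻ q, ENNReal.ofReal |q| * f ![s * q, q] :=
        lintegral_lintegral_swap (by fun_prop)

lemma lintegral_abs_mul_comp_sq_mul (F : ℝ → ℝ≥0∞) {c : ℝ} (hc : 0 < c) :
    ∫⁻ q, ENNReal.ofReal |q| * F (q ^ 2 * c) =
      ENNReal.ofReal c⁻¹ * ∫⁻ w, ENNReal.ofReal |w| * F (w ^ 2) := by
  have h_sqrt : √c ≠ 0 := (Real.sqrt_pos.2 hc).ne'
  have h_rescale : ∀ q, ENNReal.ofReal |q| * F (q ^ 2 * c) =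
      ENNReal.ofReal |(√c)⁻¹| * (ENNReal.ofReal |√c * q| * F ((√c * q) ^ 2)) := fun q => by
    rw [← mul_assoc, ← ENNReal.ofReal_mul (abs_nonneg _), ← abs_mul, inv_mul_cancel_left₀ h_sqrt,
      mul_pow, Real.sq_sqrt hc.le, mul_comm c]
  rw [lintegral_congr h_rescale, lintegral_const_mul' _ _ ENNReal.ofReal_ne_top,
    lintegral_comp_mul_left_real (fun w => ENNReal.ofReal |w| * F (w ^ 2)) h_sqrt, ← mul_assoc,
    ← ENNReal.ofReal_mul (abs_nonneg _), ← abs_mul, ← mul_inv, Real.mul_self_sqrt hc.le,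
    abs_of_pos (inv_pos.2 hc)]

end ChangeOfVariables

section Laws

/-- The hyperbolic secant law on `ℝ` with location `m`, of density `t ↦ π⁻¹ sech (t - m)`. It is the
law of the similarity measure of an elliptical vector. -/
noncomputable def sechMeasure (m : ℝ) : Measure ℝ :=
  volume.withDensity fun t => ENNReal.ofReal ((1 / π) * (1 / Real.cosh (t - m)))

lemma two_mul_exp_mul_cauchyPDFReal {γ : ℝ≥0} (hγ : γ ≠ 0) (t : ℝ) :
    2 * exp t * cauchyPDFReal 0 γ (exp t) = (1 / π) * (1 / cosh (t - log γ)) := by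
  have hγ_pos : (0 : ℝ) < γ := by positivity
  have h_cosh : cosh (t - log γ) = (exp t ^ 2 + γ ^ 2) / (2 * γ * exp t) := by
    rw [cosh_eq, neg_sub, exp_sub, exp_sub, exp_log hγ_pos]
    field
  rw [h_cosh, cauchyPDFReal_def, sub_zero]
  field

lemma map_log_cauchyMeasure {γ : ℝ≥0} (hγ : γ ≠ 0) :
    (cauchyMeasure 0 γ).map log = sechMeasure (log γ) := by
  refine Measure.ext_of_lintegral _ fun f hf => ?_
  have h_even : Function.Even fun s => cauchyPDF 0 γ s * f (log s) := fun s => by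
    simp only [cauchyPDF_def, cauchyPDFReal_def, sub_zero, neg_sq, log_neg_eq_log]
  rw [lintegral_map hf measurable_log, cauchyMeasure_of_scale_ne_zero 0 hγ, sechMeasure,
    lintegral_withDensity_eq_lintegral_mul _ (by fun_prop) (by fun_prop),
    lintegral_withDensity_eq_lintegral_mul _ (by fun_prop) hf]
  simp only [Pi.mul_apply]
  rw [lintegral_eq_two_mul_setLIntegral_Ioi h_even, setLIntegral_Ioi_eq_lintegral_exp,
    ← lintegral_const_mul' _ _ ENNReal.ofNat_ne_top]
  refine lintegral_congr fun t => ?_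
  rw [log_exp, cauchyPDF_def, ← two_mul_exp_mul_cauchyPDFReal hγ,
    ENNReal.ofReal_mul (by positivity), ENNReal.ofReal_mul zero_le_two, ENNReal.ofReal_ofNat]
  ring

end Laws

section Elliptical

variable {ι : Type*} [Fintype ι] [DecidableEq ι]

/-- `IsElliptical S μ` says that `μ` is an elliptical measure with covariance-parameter `S`: it has
a density that is a function `g` of the quadratic form `xᵀ S⁻¹ x`. The profile `g` takes values in
`[0, ∞]` and the total mass is not normalized. -/
def IsElliptical (S : Matrix ι ι ℝ) (μ : Measure (ι → ℝ)) : Prop :=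
  ∃ g : ℝ → ℝ≥0∞, Measurable g ∧ μ = volume.withDensity fun x => g (x ⬝ᵥ (S⁻¹ *ᵥ x))

lemma dotProduct_inv_mulVec_conj {A : Matrix ι ι ℝ} (hA : A.det ≠ 0) (S : Matrix ι ι ℝ)
    (x : ι → ℝ) : (A *ᵥ x) ⬝ᵥ ((A * S * Aᵀ)⁻¹ *ᵥ (A *ᵥ x)) = x ⬝ᵥ (S⁻¹ *ᵥ x) := by
  have h_inv : Aᵀ * (A * S * Aᵀ)⁻¹ * A = S⁻¹ := by
    have hA_transpose : IsUnit Aᵀ.det := det_transpose A ▸ hA.isUnit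
    rw [Matrix.mul_inv_rev, Matrix.mul_inv_rev, ← Matrix.mul_assoc,
      mul_nonsing_inv Aᵀ hA_transpose, Matrix.one_mul, Matrix.mul_assoc,
      nonsing_inv_mul A hA.isUnit, Matrix.mul_one]
  rw [← h_inv, ← mulVec_mulVec, ← mulVec_mulVec, dotProduct_mulVec x, vecMul_transpose]

lemma dotProduct_inv_mulVec_fin_two {K : Type*} [Field K] (S : Matrix (Fin 2) (Fin 2) K)
    (x : Fin 2 → K) : x ⬝ᵥ (S⁻¹ *ᵥ x) =
      (S 1 1 * x 0 ^ 2 - (S 0 1 + S 1 0) * x 0 * x 1 + S 0 0 * x 1 ^ 2) / S.det := by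
  simp only [inv_def, Ring.inverse_eq_inv', adjugate_fin_two, smul_mulVec, dotProduct_smul,
    mulVec, vec2_dotProduct, of_apply, cons_val_zero, cons_val_one, smul_eq_mul]
  ring

/- On the line `x₁ = s x₂` the quadratic form is `x₂²` times the reciprocal of a multiple of the
Cauchy density at `s`; integrating against the Jacobian `|x₂|` inverts this reciprocal. -/
lemma dotProduct_inv_mulVec_eq_sq_mul_inv_cauchyPDFReal {S : Matrix (Fin 2) (Fin 2) ℝ}
    (hS : S.PosDef) (s q : ℝ) : ![s * q, q] ⬝ᵥ (S⁻¹ *ᵥ ![s * q, q]) = q ^ 2 * (π * √S.det *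
      cauchyPDFReal (S 0 1 / S 1 1) (√S.det / S 1 1).toNNReal s)⁻¹ := by
  have h_diag : 0 < S 1 1 := hS.diag_pos
  have h_symm : S 1 0 = S 0 1 := hS.isHermitian.apply 0 1
  have h_det : S.det = S 0 0 * S 1 1 - S 0 1 ^ 2 := by rw [det_fin_two, h_symm, sq]
  obtain ⟨r, hr, h_sq⟩ : ∃ r, 0 < r ∧ r ^ 2 = S.det :=
    ⟨√S.det, Real.sqrt_pos.2 hS.det_pos, Real.sq_sqrt hS.det_pos.le⟩
  rw [dotProduct_inv_mulVec_fin_two, cauchyPDFReal_def, ← h_sq, Real.sqrt_sq hr.le,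
    Real.coe_toNNReal _ (by positivity), h_symm]
  simp only [cons_val_zero, cons_val_one]
  field_simp
  rw [h_sq, h_det]
  ring

lemma toNNReal_sqrt_det_div_ne_zero {S : Matrix (Fin 2) (Fin 2) ℝ} (hS : S.PosDef) :
    (√S.det / S 1 1).toNNReal ≠ 0 :=
  (Real.toNNReal_pos.2 (div_pos (Real.sqrt_pos.2 hS.det_pos) hS.diag_pos)).ne'

lemma lintegral_abs_mul_comp_dotProduct_inv_mulVec {S : Matrix (Fin 2) (Fin 2) ℝ} (hS : S.PosDef)
    (g : ℝ → ℝ≥0∞) (s : ℝ) :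
    ∫⁻ q, ENNReal.ofReal |q| * g (![s * q, q] ⬝ᵥ (S⁻¹ *ᵥ ![s * q, q])) =
      ENNReal.ofReal (π * √S.det) *
        cauchyPDF (S 0 1 / S 1 1) (√S.det / S 1 1).toNNReal s *
        ∫⁻ w, ENNReal.ofReal |w| * g (w ^ 2) := by
  have h_const : 0 < π * √S.det := mul_pos pi_pos (Real.sqrt_pos.2 hS.det_pos)
  have h_pdf := cauchyPDF_pos (S 0 1 / S 1 1) (toNNReal_sqrt_det_div_ne_zero hS) s
  simp only [dotProduct_inv_mulVec_eq_sq_mul_inv_cauchyPDFReal hS]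
  rw [lintegral_abs_mul_comp_sq_mul g (inv_pos.2 (mul_pos h_const h_pdf)), inv_inv,
    ENNReal.ofReal_mul h_const.le, cauchyPDF_def]

namespace IsElliptical

lemma map_mulVec {S A : Matrix ι ι ℝ} {μ : Measure (ι → ℝ)} (h : IsElliptical S μ)
    (hA : A.det ≠ 0) : IsElliptical (A * S * Aᵀ) (μ.map (A *ᵥ ·)) := by
  obtain ⟨g, hg, rfl⟩ := h
  let c := ENNReal.ofReal |A.det⁻¹|
  let G : (ι → ℝ) → ℝ≥0∞ := fun y => g (y ⬝ᵥ ((A * S * Aᵀ)⁻¹ *ᵥ y))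
  have hG : Measurable G := by fun_prop
  have h_map : (volume : Measure (ι → ℝ)).map (A *ᵥ ·) = c • volume :=
    Real.map_matrix_volume_pi_eq_smul_volume_pi hA
  refine ⟨c • g, hg.const_smul c, ?_⟩
  calc (volume.withDensity fun x => g (x ⬝ᵥ (S⁻¹ *ᵥ x))).map (A *ᵥ ·)
      = (volume.withDensity (G ∘ (A *ᵥ ·))).map (A *ᵥ ·) := by
        simp only [G, Function.comp_def, dotProduct_inv_mulVec_conj hA]
    _ = (c • volume).withDensity G := by rw [map_withDensity_comp _ (by fun_prop) hG, h_map]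
    _ = volume.withDensity (c • G) := by rw [withDensity_smul_measure, withDensity_smul c hG]

lemma exists_map_div_eq_smul {S : Matrix (Fin 2) (Fin 2) ℝ} (hS : S.PosDef)
    {μ : Measure (Fin 2 → ℝ)} (h : IsElliptical S μ) :
    ∃ K : ℝ≥0∞, μ.map (fun x => x 0 / x 1) =
      K • cauchyMeasure (S 0 1 / S 1 1) (√S.det / S 1 1).toNNReal := by
  obtain ⟨g, hg, rfl⟩ := h
  let K := ENNReal.ofReal (π * √S.det) * ∫⁻ w, ENNReal.ofReal |w| * g (w ^ 2)
  let p := cauchyPDF (S 0 1 / S 1 1) (√S.det / S 1 1).toNNReal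
  refine ⟨K, Measure.ext_of_lintegral _ fun f hf => ?_⟩
  have h_inner (s : ℝ) : ∫⁻ q, ENNReal.ofReal |q| *
      (g (![s * q, q] ⬝ᵥ (S⁻¹ *ᵥ ![s * q, q])) * f (s * q / q)) = K * (p s * f s) := by
    have h_ratio : ∀ᵐ q : ℝ, ENNReal.ofReal |q| *
        (g (![s * q, q] ⬝ᵥ (S⁻¹ *ᵥ ![s * q, q])) * f (s * q / q)) =
        ENNReal.ofReal |q| * g (![s * q, q] ⬝ᵥ (S⁻¹ *ᵥ ![s * q, q])) * f s := by
      filter_upwards [Measure.ae_ne volume (0 : ℝ)] with q hq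
      rw [mul_div_cancel_right₀ s hq, mul_assoc]
    rw [lintegral_congr_ae h_ratio, lintegral_mul_const _ (by fun_prop),
      lintegral_abs_mul_comp_dotProduct_inv_mulVec hS g s]
    ring
  rw [lintegral_map hf (by fun_prop), lintegral_smul_measure,
    cauchyMeasure_of_scale_ne_zero _ (toNNReal_sqrt_det_div_ne_zero hS),
    lintegral_withDensity_eq_lintegral_mul _ (by fun_prop) (by fun_prop),
    lintegral_withDensity_eq_lintegral_mul _ (by fun_prop) hf,
    lintegral_fin_two_eq_lintegral_abs_mul (by fun_prop), smul_eq_mul,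
    ← lintegral_const_mul _ (by fun_prop)]
  exact lintegral_congr h_inner

lemma map_div {S : Matrix (Fin 2) (Fin 2) ℝ} (hS : S.PosDef) {μ : Measure (Fin 2 → ℝ)}
    (h : IsElliptical S μ) : μ.map (fun x => x 0 / x 1) =
      μ Set.univ • cauchyMeasure (S 0 1 / S 1 1) (√S.det / S 1 1).toNNReal := by
  obtain ⟨K, hK⟩ := h.exists_map_div_eq_smul hS
  have h_mass : μ Set.univ = K := by
    rw [← Set.preimage_univ (f := fun x : Fin 2 → ℝ => x 0 / x 1),
      ← Measure.map_apply (by fun_prop) .univ, hK, Measure.smul_apply, measure_univ, smul_eq_mul,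
      mul_one]
  rw [hK, h_mass]

lemma map_log_div {d : Fin 2 → ℝ} (hd : ∀ i, 0 < d i) {μ : Measure (Fin 2 → ℝ)}
    (h : IsElliptical (diagonal d) μ) :
    μ.map (fun x => log (x 0 / x 1)) = μ Set.univ • sechMeasure (1 / 2 * log (d 0 / d 1)) := by
  have h_scale : √(diagonal d).det / diagonal d 1 1 = √(d 0 / d 1) := by
    rw [det_diagonal, Fin.prod_univ_two, diagonal_apply_eq, Real.sqrt_div (hd 0).le,
      Real.sqrt_mul (hd 0).le, mul_div_assoc, Real.sqrt_div_self', mul_one_div]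
  have h_pos : 0 < √(d 0 / d 1) := Real.sqrt_pos.2 (div_pos (hd 0) (hd 1))
  have h_div := h.map_div (.diagonal hd)
  rw [diagonal_apply_ne d zero_ne_one, zero_div, h_scale] at h_div
  calc μ.map (fun x => log (x 0 / x 1)) = (μ.map fun x => x 0 / x 1).map log :=
        (Measure.map_map measurable_log (by fun_prop)).symm
    _ = μ Set.univ • sechMeasure (log √(d 0 / d 1)) := by
        rw [h_div, Measure.map_smul, map_log_cauchyMeasure (Real.toNNReal_pos.2 h_pos).ne',
          Real.coe_toNNReal _ h_pos.le]
    _ = _ := by rw [Real.log_sqrt (div_pos (hd 0) (hd 1)).le, one_div_mul_eq_div]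

end IsElliptical

end Elliptical

lemma conj_smul_equicorrelation {R : Type*} [CommRing R] (c r : R) :
    !![1, 1; 1, -1] * (c • !![1, r; r, 1]) * !![1, 1; 1, -1]ᵀ =
      diagonal ![2 * c * (1 + r), 2 * c * (1 - r)] := by
  ext i j
  fin_cases i <;> fin_cases j <;>
    simp only [diagonal_vec2, Matrix.mul_apply, Matrix.smul_apply, transpose_apply,
      Fin.sum_univ_two, of_apply, cons_val_zero, cons_val_one, Fin.zero_eta, Fin.mk_one,
      smul_eq_mul] <;>
    ring

-- No absolute values and no sign conditions: `Real.log z` is `log |z|`, and `Real.log 0 = 0`.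
lemma half_mul_log_sq_div_sq (a b : ℝ) : 1 / 2 * log (a ^ 2 / b ^ 2) = log (a / b) := by
  rw [← div_pow, Real.log_pow, Nat.cast_ofNat, one_div, inv_mul_cancel_left₀ two_ne_zero]

theorem stmt1_general {σ ρ : ℝ} (hσ : σ ≠ 0) (hρ : ρ ∈ Set.Ioo (-1 : ℝ) 1)
    {μ : Measure (Fin 2 → ℝ)} (h : IsElliptical (σ ^ 2 • !![1, ρ; ρ, 1]) μ) :
    μ.map (fun x => (1 / 2) * Real.log ((x 0 + x 1) ^ 2 / (x 0 - x 1) ^ 2))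
      = μ Set.univ • sechMeasure ((1 / 2) * Real.log ((1 + ρ) / (1 - ρ))) := by
  let A : Matrix (Fin 2) (Fin 2) ℝ := !![1, 1; 1, -1]
  let d : Fin 2 → ℝ := ![2 * σ ^ 2 * (1 + ρ), 2 * σ ^ 2 * (1 - ρ)]
  have hd : ∀ i, 0 < d i := Fin.forall_fin_two.2
    ⟨mul_pos (by positivity) (by linarith [hρ.1]), mul_pos (by positivity) (by linarith [hρ.2])⟩
  have hA : A.det ≠ 0 := by norm_num [A, det_fin_two_of]
  have h_diag : IsElliptical (diagonal d) (μ.map (A *ᵥ ·)) :=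
    conj_smul_equicorrelation (σ ^ 2) ρ ▸ h.map_mulVec hA
  have h_sim (x : Fin 2 → ℝ) : 1 / 2 * log ((x 0 + x 1) ^ 2 / (x 0 - x 1) ^ 2) =
      log ((A *ᵥ x) 0 / (A *ᵥ x) 1) := by
    rw [half_mul_log_sq_div_sq]
    simp [A, mulVec, dotProduct, Fin.sum_univ_two, sub_eq_add_neg]
  have h_ratio : d 0 / d 1 = (1 + ρ) / (1 - ρ) :=
    mul_div_mul_left _ _ (by positivity)
  have hA_meas : Measurable (A *ᵥ ·) := by fun_prop
  calc μ.map (fun x => (1 / 2) * Real.log ((x 0 + x 1) ^ 2 / (x 0 - x 1) ^ 2))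
      = (μ.map (A *ᵥ ·)).map (fun y => log (y 0 / y 1)) := by
        rw [Measure.map_map (by fun_prop) hA_meas, funext h_sim]
        rfl
    _ = _ := by
        rw [h_diag.map_log_div hd, h_ratio, Measure.map_apply hA_meas .univ, Set.preimage_univ]

/-- For `σ > 0`, `ρ ∈ (-1,1)`, `Σ = σ²·[[1,ρ],[ρ,1]]`, and a Borel probability
measure `μ` on `ℝ²` with density `x ↦ g (xᵀ Σ⁻¹ x)` w.r.t. Lebesgue measure, the pushforward
of `μ` under `x ↦ atanh (2x₁x₂/(x₁²+x₂²)) = ½ log((x₁+x₂)²/(x₁-x₂)²)` has density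
`t ↦ (1/π)·sech(t - atanh ρ)` w.r.t. Lebesgue measure on `ℝ`. -/
theorem stmt1 (σ ρ : ℝ) (hσ : 0 < σ) (hρ : ρ ∈ Set.Ioo (-1 : ℝ) 1)
    (g : ℝ → ℝ) (hg : Measurable g) (hg0 : ∀ t, 0 ≤ g t)
    (μ : Measure (Fin 2 → ℝ)) [IsProbabilityMeasure μ]
    (hμ : μ = volume.withDensity (fun x => ENNReal.ofReal
      (g (x ⬝ᵥ ((σ ^ 2 • !![1, ρ; ρ, 1])⁻¹ *ᵥ x))))) :
    μ.map (fun x => (1 / 2) * Real.log ((x 0 + x 1) ^ 2 / (x 0 - x 1) ^ 2))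
      = volume.withDensity (fun t => ENNReal.ofReal
          ((1 / π) * (1 / Real.cosh (t - (1 / 2) * Real.log ((1 + ρ) / (1 - ρ)))))) := by
  rw [stmt1_general hσ.ne' hρ ⟨_, hg.ennreal_ofReal, hμ⟩, measure_univ, one_smul, sechMeasure]
end

section
/- Let n ≥ 2 and define the probability density f(y) = (1/B(1/2, (n−1)/2)) · n·e^{ny/2}/(1 + e^{ny})^{n/2} on ℝ. Then y ↦ y·f(y) is integrable and ∫_ℝ y·f(y) dy = −ωₙ, where ωₙ = (1/n)·(ψ((n−1)/2) − ψ(1/2)) and ψ(t) = d/dt log Γ(t) is the derivative of the logarithm of the Gamma function (the digamma function). -/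
/-!
The sigmoid `x ↦ e^x / (1 + e^x)` pulls the Beta density with parameters `a, b` back to
`e^{a x} / (B(a, b) (1 + e^x)^{a + b})`, which is therefore a probability density. Multiplying it
by `e^{t x}` replaces `(a, b)` by `(a + t, b - t)`, so its moment generating function is
`t ↦ B(a + t, b - t) / B(a, b)` for `-a < t < b`. As `(a + t) + (b - t)` does not depend on `t`, the
cumulant generating function is `log Γ(a + t) + log Γ(b - t)` up to a constant, and its derivative
at the interior point `0`, which is the mean, equals `ψ(a) - ψ(b)`. The density `f` is that of
`X / n`, where `X` has the parameters `a = 1/2` and `b = (n - 1)/2`.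
-/

open MeasureTheory Real

/-- The centered Logistic-Beta density
`f(y) = (1/B(1/2,(n-1)/2))·n·e^{ny/2}/(1+e^{ny})^{n/2}`, where
`B(a,b) = Γ(a)Γ(b)/Γ(a+b)`. -/
noncomputable def logisticBetaDensity (n : ℕ) (y : ℝ) : ℝ :=
  (Real.Gamma ((n : ℝ) / 2) / (Real.Gamma (1 / 2) * Real.Gamma (((n : ℝ) - 1) / 2)))
    * ((n : ℝ) * Real.exp ((n : ℝ) * y / 2)
        / (1 + Real.exp ((n : ℝ) * y)) ^ ((n : ℝ) / 2))

/-- The digamma function `ψ`, realized as the derivative of `t ↦ log Γ(t)`. -/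
noncomputable def digammaFn (t : ℝ) : ℝ := deriv (fun s => Real.log (Real.Gamma s)) t

open ProbabilityTheory

lemma one_sub_sigmoid (x : ℝ) : 1 - sigmoid x = (1 + exp x)⁻¹ := by
  rw [← sigmoid_neg, sigmoid_def, neg_neg]

lemma sigmoid_eq_exp_mul (x : ℝ) : sigmoid x = exp x * (1 + exp x)⁻¹ := by
  rw [← one_sub_sigmoid, ← sigmoid_neg, mul_comm]
  simpa only [neg_neg] using (sigmoid_mul_rexp_neg (-x)).symm

lemma sigmoid_rpow_mul_one_sub_sigmoid_rpow (a b x : ℝ) :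
    sigmoid x ^ a * (1 - sigmoid x) ^ b = exp (a * x) / (1 + exp x) ^ (a + b) := by
  have hpos : 0 < 1 + exp x := by positivity
  rw [one_sub_sigmoid, sigmoid_eq_exp_mul, mul_rpow (exp_pos x).le (inv_pos.2 hpos).le, mul_assoc,
    ← rpow_add (inv_pos.2 hpos), inv_rpow hpos.le, ← exp_mul, mul_comm x a, div_eq_mul_inv]

lemma sigmoid_mul_one_sub_sigmoid_nonneg (x : ℝ) : 0 ≤ sigmoid x * (1 - sigmoid x) :=
  mul_nonneg (sigmoid_nonneg x) (sub_nonneg.2 (sigmoid_le_one x))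

lemma setLIntegral_Ioo_zero_one_eq_lintegral_sigmoid (f : ℝ → ENNReal) :
    ∫⁻ x in Set.Ioo 0 1, f x
      = ∫⁻ x, ENNReal.ofReal (sigmoid x * (1 - sigmoid x)) * f (sigmoid x) := by
  have h := lintegral_image_eq_lintegral_abs_deriv_mul MeasurableSet.univ
    (fun x _ => (hasDerivAt_sigmoid x).hasDerivWithinAt) sigmoid_injective.injOn f
  simpa only [Set.image_univ, range_sigmoid, Measure.restrict_univ,
    abs_of_nonneg (sigmoid_mul_one_sub_sigmoid_nonneg _)] using h

lemma log_beta {a b : ℝ} (ha : 0 < a) (hb : 0 < b) :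
    log (beta a b) = log (Gamma a) + log (Gamma b) - log (Gamma (a + b)) := by
  have hΓa := (Gamma_pos_of_pos ha).ne'
  have hΓb := (Gamma_pos_of_pos hb).ne'
  rw [beta, log_div (mul_ne_zero hΓa hΓb) (Gamma_pos_of_pos (add_pos ha hb)).ne',
    log_mul hΓa hΓb]

lemma hasDerivAt_log_Gamma {a : ℝ} (ha : 0 < a) :
    HasDerivAt (fun s => log (Gamma s)) (digammaFn a) a :=
  have hne (m : ℕ) : a ≠ -m := ((neg_nonpos.2 m.cast_nonneg).trans_lt ha).ne'
  ((differentiableAt_Gamma hne).log (Gamma_pos_of_pos ha).ne').hasDerivAt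

section LogisticBeta

/-- The real-valued density of the Logistic-Beta distribution, the law of `log (U / (1 - U))` for
`U` Beta distributed with parameters `a` and `b`. -/
noncomputable def logisticBetaPDFReal (a b x : ℝ) : ℝ :=
  (beta a b)⁻¹ * (exp (a * x) / (1 + exp x) ^ (a + b))

/-- The Logistic-Beta distribution on `ℝ`; it is a probability measure when `0 < a` and `0 < b`. -/
noncomputable def logisticBetaMeasure (a b : ℝ) : Measure ℝ :=
  volume.withDensity fun x => ENNReal.ofReal (logisticBetaPDFReal a b x)

@[fun_prop]
lemma measurable_logisticBetaPDFReal (a b : ℝ) : Measurable (logisticBetaPDFReal a b) := by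
  unfold logisticBetaPDFReal
  fun_prop

lemma deriv_sigmoid_mul_betaPDFReal_sigmoid (a b x : ℝ) :
    sigmoid x * (1 - sigmoid x) * betaPDFReal a b (sigmoid x) = logisticBetaPDFReal a b x := by
  have hs : sigmoid x ≠ 0 := (sigmoid_pos x).ne'
  have hs' : 1 - sigmoid x ≠ 0 := (sub_pos.2 (sigmoid_lt_one x)).ne'
  rw [betaPDFReal, if_pos ⟨sigmoid_pos x, sigmoid_lt_one x⟩, logisticBetaPDFReal,
    ← sigmoid_rpow_mul_one_sub_sigmoid_rpow, rpow_sub_one hs, rpow_sub_one hs']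
  field_simp

variable {a b : ℝ}

lemma logisticBetaPDFReal_nonneg (ha : 0 < a) (hb : 0 < b) (x : ℝ) :
    0 ≤ logisticBetaPDFReal a b x := by
  have := beta_pos ha hb
  unfold logisticBetaPDFReal
  positivity

lemma lintegral_logisticBetaPDFReal_eq_one (ha : 0 < a) (hb : 0 < b) :
    ∫⁻ x, ENNReal.ofReal (logisticBetaPDFReal a b x) = 1 := by
  rw [← lintegral_betaPDF_eq_one ha hb, lintegral_betaPDF,
    setLIntegral_Ioo_zero_one_eq_lintegral_sigmoid]
  refine lintegral_congr fun x => ?_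
  rw [← betaPDF_of_pos_lt_one (sigmoid_pos x) (sigmoid_lt_one x), betaPDF,
    ← ENNReal.ofReal_mul (sigmoid_mul_one_sub_sigmoid_nonneg x),
    deriv_sigmoid_mul_betaPDFReal_sigmoid]

lemma isProbabilityMeasure_logisticBetaMeasure (ha : 0 < a) (hb : 0 < b) :
    IsProbabilityMeasure (logisticBetaMeasure a b) where
  measure_univ := by simp [logisticBetaMeasure, lintegral_logisticBetaPDFReal_eq_one ha hb]

lemma integrable_logisticBetaMeasure_iff (ha : 0 < a) (hb : 0 < b) {g : ℝ → ℝ} :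
    Integrable g (logisticBetaMeasure a b)
      ↔ Integrable fun x => g x * logisticBetaPDFReal a b x := by
  rw [logisticBetaMeasure, integrable_withDensity_iff (by fun_prop) (by simp)]
  simp only [ENNReal.toReal_ofReal (logisticBetaPDFReal_nonneg ha hb _)]

lemma integral_logisticBetaMeasure (ha : 0 < a) (hb : 0 < b) (g : ℝ → ℝ) :
    ∫ x, g x ∂logisticBetaMeasure a b = ∫ x, g x * logisticBetaPDFReal a b x := by
  rw [logisticBetaMeasure, integral_withDensity_eq_integral_toReal_smul (by fun_prop) (by simp)]
  simp only [ENNReal.toReal_ofReal (logisticBetaPDFReal_nonneg ha hb _), smul_eq_mul, mul_comm]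

lemma integrable_logisticBetaPDFReal (ha : 0 < a) (hb : 0 < b) :
    Integrable (logisticBetaPDFReal a b) := by
  have := isProbabilityMeasure_logisticBetaMeasure ha hb
  simpa only [one_mul] using
    (integrable_logisticBetaMeasure_iff ha hb).1 (integrable_const (1 : ℝ))

lemma integral_logisticBetaPDFReal_eq_one (ha : 0 < a) (hb : 0 < b) :
    ∫ x, logisticBetaPDFReal a b x = 1 := by
  have := isProbabilityMeasure_logisticBetaMeasure ha hb
  simpa using (integral_logisticBetaMeasure ha hb fun _ => 1).symm

lemma exp_mul_logisticBetaPDFReal {t : ℝ} (hta : 0 < a + t) (htb : 0 < b - t) (x : ℝ) :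
    exp (t * x) * logisticBetaPDFReal a b x
      = beta (a + t) (b - t) / beta a b * logisticBetaPDFReal (a + t) (b - t) x := by
  have hbeta := (beta_pos hta htb).ne'
  rw [logisticBetaPDFReal, logisticBetaPDFReal, add_mul a t x, Real.exp_add,
    add_add_sub_cancel a b t]
  field_simp

lemma Ioo_subset_integrableExpSet_logisticBetaMeasure (ha : 0 < a) (hb : 0 < b) :
    Set.Ioo (-a) b ⊆ integrableExpSet id (logisticBetaMeasure a b) := by
  intro t ht
  have hta : 0 < a + t := by linarith [ht.1]
  have htb : 0 < b - t := by linarith [ht.2]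
  refine (integrable_logisticBetaMeasure_iff ha hb).2 ?_
  simp only [id, exp_mul_logisticBetaPDFReal hta htb]
  exact (integrable_logisticBetaPDFReal hta htb).const_mul _

lemma zero_mem_interior_integrableExpSet_logisticBetaMeasure (ha : 0 < a) (hb : 0 < b) :
    0 ∈ interior (integrableExpSet id (logisticBetaMeasure a b)) :=
  mem_interior.2 ⟨_, Ioo_subset_integrableExpSet_logisticBetaMeasure ha hb, isOpen_Ioo,
    neg_lt_zero.2 ha, hb⟩

lemma mgf_id_logisticBetaMeasure (ha : 0 < a) (hb : 0 < b) {t : ℝ} (ht : t ∈ Set.Ioo (-a) b) :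
    mgf id (logisticBetaMeasure a b) t = beta (a + t) (b - t) / beta a b := by
  have hta : 0 < a + t := by linarith [ht.1]
  have htb : 0 < b - t := by linarith [ht.2]
  rw [mgf, integral_logisticBetaMeasure ha hb]
  simp only [id, exp_mul_logisticBetaPDFReal hta htb]
  rw [integral_const_mul, integral_logisticBetaPDFReal_eq_one hta htb, mul_one]

lemma cgf_id_logisticBetaMeasure (ha : 0 < a) (hb : 0 < b) {t : ℝ} (ht : t ∈ Set.Ioo (-a) b) :
    cgf id (logisticBetaMeasure a b) t
      = log (Gamma (a + t)) + log (Gamma (b - t)) - (log (Gamma a) + log (Gamma b)) := by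
  have hta : 0 < a + t := by linarith [ht.1]
  have htb : 0 < b - t := by linarith [ht.2]
  rw [cgf, mgf_id_logisticBetaMeasure ha hb ht,
    log_div (beta_pos hta htb).ne' (beta_pos ha hb).ne', log_beta hta htb, log_beta ha hb,
    add_add_sub_cancel, sub_sub_sub_cancel_right]

lemma hasDerivAt_cgf_id_logisticBetaMeasure (ha : 0 < a) (hb : 0 < b) :
    HasDerivAt (cgf id (logisticBetaMeasure a b)) (digammaFn a - digammaFn b) 0 := by
  have hΓa : HasDerivAt (fun t => log (Gamma (a + t))) (digammaFn a) 0 :=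
    HasDerivAt.comp_const_add a 0 (by simpa using hasDerivAt_log_Gamma ha)
  have hΓb : HasDerivAt (fun t => log (Gamma (b - t))) (-digammaFn b) 0 :=
    HasDerivAt.comp_const_sub b 0 (by simpa using hasDerivAt_log_Gamma hb)
  rw [sub_eq_add_neg]
  refine ((hΓa.add hΓb).sub_const (log (Gamma a) + log (Gamma b))).congr_of_eventuallyEq ?_
  filter_upwards [Ioo_mem_nhds (neg_lt_zero.2 ha) hb] with t ht
  exact cgf_id_logisticBetaMeasure ha hb ht

lemma integrable_id_logisticBetaMeasure (ha : 0 < a) (hb : 0 < b) :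
    Integrable id (logisticBetaMeasure a b) :=
  integrable_of_mem_interior_integrableExpSet
    (zero_mem_interior_integrableExpSet_logisticBetaMeasure ha hb)

lemma integral_id_logisticBetaMeasure (ha : 0 < a) (hb : 0 < b) :
    ∫ x, id x ∂logisticBetaMeasure a b = digammaFn a - digammaFn b := by
  have := isProbabilityMeasure_logisticBetaMeasure ha hb
  have hmean := deriv_cgf_zero (zero_mem_interior_integrableExpSet_logisticBetaMeasure ha hb)
  rwa [(hasDerivAt_cgf_id_logisticBetaMeasure ha hb).deriv, probReal_univ, div_one, eq_comm]
    at hmean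

end LogisticBeta

lemma logisticBetaDensity_eq (n : ℕ) (y : ℝ) :
    logisticBetaDensity n y
      = |(n : ℝ)| * logisticBetaPDFReal (1 / 2) (((n : ℝ) - 1) / 2) (n * y) := by
  have hadd : (1 : ℝ) / 2 + ((n : ℝ) - 1) / 2 = n / 2 := by ring
  have hmul : (1 : ℝ) / 2 * (n * y) = n * y / 2 := by ring
  rw [logisticBetaDensity, logisticBetaPDFReal, beta, inv_div, hadd, hmul, Nat.abs_cast]
  ring

theorem stmt7_general {a b c : ℝ} (ha : 0 < a) (hb : 0 < b) (hc : c ≠ 0) :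
    Integrable (fun y => y * (|c| * logisticBetaPDFReal a b (c * y))) ∧
    ∫ y, y * (|c| * logisticBetaPDFReal a b (c * y)) = (digammaFn a - digammaFn b) / c := by
  have hscale (y : ℝ) : y * (|c| * logisticBetaPDFReal a b (c * y))
      = |c| / c * (c * y * logisticBetaPDFReal a b (c * y)) := by
    field_simp
  have hint :=
    (integrable_logisticBetaMeasure_iff ha hb).1 (integrable_id_logisticBetaMeasure ha hb)
  have hmean := integral_id_logisticBetaMeasure ha hb
  rw [integral_logisticBetaMeasure ha hb] at hmean
  simp only [id] at hint hmean
  simp only [hscale]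
  refine ⟨(hint.comp_mul_left' hc).const_mul _, ?_⟩
  rw [integral_const_mul,
    Measure.integral_comp_mul_left (fun x => x * logisticBetaPDFReal a b x), hmean, abs_inv,
    smul_eq_mul]
  have : |c| ≠ 0 := abs_ne_zero.2 hc
  field_simp

/-- For `n ≥ 2`, `y ↦ y·f(y)` is integrable for the centered Logistic-Beta
density `f` and `∫ y·f(y) dy = -ωₙ` where `ωₙ = (1/n)(ψ((n-1)/2) - ψ(1/2))`. -/
theorem stmt7 (n : ℕ) (hn : 2 ≤ n) :
    Integrable (fun y : ℝ => y * logisticBetaDensity n y) ∧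
    ∫ y : ℝ, y * logisticBetaDensity n y
      = -((1 / (n : ℝ)) * (digammaFn (((n : ℝ) - 1) / 2) - digammaFn (1 / 2))) := by
  have hn1 : (1 : ℝ) < n := by exact_mod_cast hn
  have hmean := stmt7_general one_half_pos (half_pos (sub_pos.2 hn1)) (zero_lt_one.trans hn1).ne'
  simp only [logisticBetaDensity_eq, one_div_mul_eq_div, ← neg_div, neg_sub]
  exact hmean
end
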